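/- arXiv:1301.6826 — 3 statements merged into one kernel-verified Lean document; each statement's English description precedes it below -/
import Mathlib

section
/- Let G be a finite group such that G/F(G) is abelian, where F(G) is the Fitting subgroup, and let H be a subgroup of G. Then H is SS-permutable in G if and only if H is NSS-permutable in G. -/
open scoped Pointwise

section Defs

variable {G : Type*} [Group G]

/-- `K` is an SS-permutable supplement of `H` in `G`: `HK = G` and `H` permutes with
every Sylow subgroup of `K`. -/
def IsSSSupplement (H K : Subgroup G) : Prop :=
  (H : Set G) * (K : Set G) = Set.univ ∧
    ∀ (p : ℕ) [Fact p.Prime] (P : Sylow p K),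
      (H : Set G) * ((P.toSubgroup.map K.subtype : Subgroup G) : Set G) =
        ((P.toSubgroup.map K.subtype : Subgroup G) : Set G) * (H : Set G)

/-- `H` is SS-permutable in `G`: `H` has a supplement `K` such that `H` permutes with
every Sylow subgroup of `K`. -/
def IsSSPermutable (H : Subgroup G) : Prop :=
  ∃ K : Subgroup G, IsSSSupplement H K

/-- `H` is NSS-permutable in `G`: `H` has a normal supplement `K` such that `H` permutes
with every Sylow subgroup of `K`. -/
def IsNSSPermutable (H : Subgroup G) : Prop :=
  ∃ K : Subgroup G, K.Normal ∧ IsSSSupplement H K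

/-- `H` is S-permutable in `G`: it permutes with every Sylow subgroup of `G`. -/
def IsSPermutable (H : Subgroup G) : Prop :=
  ∀ (p : ℕ) [Fact p.Prime] (P : Sylow p G),
    (H : Set G) * ((P : Subgroup G) : Set G) = ((P : Subgroup G) : Set G) * (H : Set G)

/-- `H` is semipermutable in `G`: `HX = XH` for every subgroup `X` with `gcd(|H|,|X|) = 1`. -/
def IsSemipermutable (H : Subgroup G) : Prop :=
  ∀ X : Subgroup G, Nat.Coprime (Nat.card H) (Nat.card X) →
    (H : Set G) * (X : Set G) = (X : Set G) * (H : Set G)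

/-- `H` is S-semipermutable in `G`: `HQ = QH` for every Sylow `q`-subgroup `Q` of `G`
with `q` a prime not dividing `|H|`. -/
def IsSSemipermutable (H : Subgroup G) : Prop :=
  ∀ (q : ℕ) [Fact q.Prime], ¬ q ∣ Nat.card H → ∀ Q : Sylow q G,
    (H : Set G) * ((Q : Subgroup G) : Set G) = ((Q : Subgroup G) : Set G) * (H : Set G)

end Defs

/-- `G` is an SST-group: SS-permutability is a transitive relation. -/
def IsSSTGroup (G : Type*) [Group G] : Prop :=
  ∀ H K : Subgroup G, H ≤ K → IsSSPermutable (H.subgroupOf K) → IsSSPermutable K →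
    IsSSPermutable H

/-- `G` is an NSST-group: NSS-permutability is a transitive relation. -/
def IsNSSTGroup (G : Type*) [Group G] : Prop :=
  ∀ H K : Subgroup G, H ≤ K → IsNSSPermutable (H.subgroupOf K) → IsNSSPermutable K →
    IsNSSPermutable H

/-- `G` is a PST-group: S-permutability is a transitive relation. -/
def IsPSTGroup (G : Type*) [Group G] : Prop :=
  ∀ H K : Subgroup G, H ≤ K → IsSPermutable (H.subgroupOf K) → IsSPermutable K →
    IsSPermutable H

/-- `G` is a BT-group: semipermutability is a transitive relation. -/
def IsBTGroup (G : Type*) [Group G] : Prop :=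
  ∀ H K : Subgroup G, H ≤ K → IsSemipermutable (H.subgroupOf K) → IsSemipermutable K →
    IsSemipermutable H

/-!
If `K` is an SS-permutable supplement of `H`, so is `F(G) K`, and this subgroup is normal because
`G / F(G)` is abelian. Adding one nilpotent normal subgroup `N` at a time, the point is that `H`
permutes with the Sylow `p`-subgroups of `N K`. The Sylow `p`-subgroup `O` of `N` is normal in `G`,
and if `P` is a Sylow `p`-subgroup of `K`, then `O P` is one of `N K`; hence all of them have the
form `O P ^ g`. Since `G = H K`, each `P ^ g` is an `H`-conjugate of a Sylow subgroup of `K`, so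
`H` permutes with it, and `H` permutes with the normal subgroup `O`.
-/

section Index

variable {G : Type*} [Group G]

lemma relIndex_eq_of_subset_mul {A B C : Subgroup G} (hBC : B ≤ C)
    (hC : (C : Set G) ⊆ (B : Set G) * (A : Set G)) : A.relIndex C = A.relIndex B := by
  refine (Nat.card_congr (Equiv.ofBijective (Subgroup.quotientSubgroupOfEmbeddingOfLE A hBC)
    ⟨(Subgroup.quotientSubgroupOfEmbeddingOfLE A hBC).injective, fun x => ?_⟩)).symm
  obtain ⟨⟨c, hc⟩, rfl⟩ := QuotientGroup.mk_surjective x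
  obtain ⟨b, hb, a, ha, rfl⟩ := hC hc
  refine ⟨QuotientGroup.mk ⟨b, hb⟩, QuotientGroup.eq.2 ?_⟩
  simpa [Subgroup.mem_subgroupOf] using ha

lemma relIndex_map_subtype_self {K : Subgroup G} (P : Subgroup K) :
    (P.map K.subtype).relIndex K = P.index := by
  rw [Subgroup.relIndex, Subgroup.subgroupOf,
    Subgroup.comap_map_eq_self_of_injective K.subtype_injective]

lemma relIndex_sup_sup_dvd_mul {O N P K : Subgroup G} [O.Normal] [N.Normal]
    (hON : O ≤ N) (hPK : P ≤ K) :
    (O ⊔ P).relIndex (N ⊔ K) ∣ P.relIndex K * O.relIndex N := by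
  have hOK : (O ⊔ P).relIndex (O ⊔ K) = (O ⊔ P).relIndex K := by
    refine relIndex_eq_of_subset_mul le_sup_right ?_
    rw [sup_comm O K, Subgroup.mul_normal]
    exact Set.mul_subset_mul_left (le_sup_left : O ≤ O ⊔ P)
  have hNK : (O ⊔ K).relIndex (N ⊔ K) = (O ⊔ K).relIndex N := by
    refine relIndex_eq_of_subset_mul le_sup_left ?_
    rw [Subgroup.normal_mul]
    exact Set.mul_subset_mul_left (le_sup_right : K ≤ O ⊔ K)
  rw [← Subgroup.relIndex_mul_relIndex _ _ _ (sup_le_sup_left hPK O) (sup_le_sup_right hON K),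
    hOK, hNK]
  exact mul_dvd_mul (Subgroup.relIndex_dvd_of_le_left K le_sup_right)
    (Subgroup.relIndex_dvd_of_le_left N le_sup_left)

end Index

section Conjugation

variable {G : Type*} [Group G]

lemma map_conj_smul {G' : Type*} [Group G'] (f : G →* G') (g : G) (P : Subgroup G) :
    (MulAut.conj g • P).map f = MulAut.conj (f g) • P.map f := by
  have hcomp : f.comp (MulAut.conj g).toMonoidHom = (MulAut.conj (f g)).toMonoidHom.comp f := by
    ext x
    simp
  exact (P.map_map _ _).trans ((congrArg P.map hcomp).trans (P.map_map _ _).symm)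

lemma exists_map_sylow_sup_eq_sup_conj_smul [Finite G] {p : ℕ} [Fact p.Prime]
    {N K : Subgroup G} [N.Normal] (O : Sylow p N) [(O.map N.subtype).Normal] (P : Sylow p K)
    (Q : Sylow p (N ⊔ K : Subgroup G)) :
    ∃ g : G, Q.map (N ⊔ K).subtype = O.map N.subtype ⊔ MulAut.conj g • P.map K.subtype := by
  set R : Subgroup G := O.map N.subtype ⊔ P.map K.subtype
  have hON : O.map N.subtype ≤ N := Subgroup.map_subtype_le _
  have hPK : P.map K.subtype ≤ K := Subgroup.map_subtype_le _
  have hR : IsPGroup p (R.subgroupOf (N ⊔ K)) :=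
    ((O.2.map _).to_sup_of_normal_left (P.2.map _)).comap_subtype
  have hindex : ¬p ∣ (R.subgroupOf (N ⊔ K)).index := fun h => by
    have h := h.trans (relIndex_sup_sup_dvd_mul hON hPK)
    rw [relIndex_map_subtype_self, relIndex_map_subtype_self] at h
    exact Nat.Prime.not_dvd_mul Fact.out P.not_dvd_index O.not_dvd_index h
  obtain ⟨g, rfl⟩ := MulAction.exists_smul_eq (N ⊔ K : Subgroup G) (hR.toSylow hindex) Q
  refine ⟨g, ?_⟩
  rw [Sylow.coe_subgroup_smul, IsPGroup.toSylow_coe, map_conj_smul, Subgroup.subtype_apply,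
    Subgroup.map_subgroupOf_eq_of_le (sup_le_sup hON hPK), Subgroup.smul_sup,
    Subgroup.Normal.conj_smul_eq_self]

end Conjugation

namespace IsSSSupplement

variable {G : Type*} [Group G] {H K : Subgroup G}

lemma commute_conj_smul (hK : IsSSSupplement H K) {p : ℕ} [Fact p.Prime] (P : Sylow p K) (g : G) :
    Commute (H : Set G) (MulAut.conj g • P.map K.subtype : Subgroup G) := by
  obtain ⟨h, hh, k, hk, rfl⟩ : g ∈ (H : Set G) * (K : Set G) := hK.1 ▸ Set.mem_univ g
  have hconj : MulAut.conj k • P.map K.subtype =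
      ((⟨k, hk⟩ : K) • P : Sylow p K).map K.subtype :=
    (map_conj_smul K.subtype ⟨k, hk⟩ P).symm
  have hcomm : Commute (H : Set G) (MulAut.conj k • P.map K.subtype : Subgroup G) :=
    hconj ▸ hK.2 p _
  have hcomm' := hcomm.map (MulDistribMulAction.toMonoidHom (Set G) (MulAut.conj h))
  simpa only [MulDistribMulAction.toMonoidHom_apply, ← Subgroup.coe_pointwise_smul,
    Subgroup.conj_smul_eq_self_of_mem hh, ← mul_smul, ← map_mul] using hcomm'

lemma sup_of_isNilpotent [Finite G] (hK : IsSSSupplement H K) (N : Subgroup G) [N.Normal]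
    [Group.IsNilpotent N] : IsSSSupplement H (N ⊔ K) := by
  refine ⟨Set.univ_subset_iff.1 (hK.1 ▸ Set.mul_subset_mul_left (le_sup_right : K ≤ N ⊔ K)),
    fun p _ Q => ?_⟩
  obtain ⟨O⟩ : Nonempty (Sylow p N) := inferInstance
  obtain ⟨P⟩ : Nonempty (Sylow p K) := inferInstance
  have : O.Characteristic := O.characteristic_of_normal inferInstance
  obtain ⟨g, hQ⟩ := exists_map_sylow_sup_eq_sup_conj_smul O P Q
  rw [hQ, Subgroup.normal_mul]
  exact Commute.mul_right (Subgroup.set_mul_normal_comm _ _) (hK.commute_conj_smul P g)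

lemma sSup_sup_of_isNilpotent [Finite G] (hK : IsSSSupplement H K) (S : Set (Subgroup G))
    (hS : ∀ N ∈ S, N.Normal ∧ Group.IsNilpotent N) : IsSSSupplement H (sSup S ⊔ K) := by
  induction S, S.toFinite using Set.Finite.induction_on with
  | empty => simpa using hK
  | @insert N S _ _ ih =>
    obtain ⟨_, _⟩ := hS N (Set.mem_insert N S)
    rw [sSup_insert, sup_assoc]
    exact (ih fun M hM => hS M (Set.mem_insert_of_mem N hM)).sup_of_isNilpotent N

end IsSSSupplement

theorem isSSPermutable_iff_isNSSPermutable_of_nilpotent_by_abelian_general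
    {G : Type*} [Group G] [Finite G]
    (hG : ∀ L : Subgroup G, sSup {N : Subgroup G | N.Normal ∧ Group.IsNilpotent N} ≤ L → L.Normal)
    (H : Subgroup G) : IsSSPermutable H ↔ IsNSSPermutable H :=
  ⟨fun ⟨_, hK⟩ => ⟨_, hG _ le_sup_left, hK.sSup_sup_of_isNilpotent _ fun _ hN => hN⟩,
    fun ⟨K, _, hK⟩ => ⟨K, hK⟩⟩

/-- Lemma 2.5: in a finite group with `G/F(G)` abelian, SS-permutability and
NSS-permutability coincide. -/
theorem isSSPermutable_iff_isNSSPermutable_of_nilpotent_by_abelian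
    {G : Type*} [Group G] [Finite G] (F : Subgroup G) [F.Normal]
    (hF : F = sSup {N : Subgroup G | N.Normal ∧ Group.IsNilpotent N})
    (hab : ∀ a b : G ⧸ F, a * b = b * a) (H : Subgroup G) :
    IsSSPermutable H ↔ IsNSSPermutable H := by
  have hcomm : commutator G ≤ F := Subgroup.Normal.quotient_commutative_iff_commutator_le.1 ⟨⟨hab⟩⟩
  exact isSSPermutable_iff_isNSSPermutable_of_nilpotent_by_abelian_general
    (fun _ hL => Subgroup.Normal.of_commutator_le G (hcomm.trans (hF.trans_le hL))) H
end

section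
/- Let T and S be subgroups of a finite solvable group G that are both SS-permutable (resp. both NSS-permutable) in G and satisfy gcd(|T|,|S|) = 1. Then the subgroup ⟨T, S⟩ generated by T and S is SS-permutable (resp. NSS-permutable) in G. Moreover, if T and S are of prime power order, the conclusion holds without assuming G solvable. -/
open scoped Pointwise

/-!
Let `K` and `L` be supplements witnessing the permutability of `T` and `S`; then `K ⊓ L` is a
witness for `J = T ⊔ S`. Since `K` and `L` have coprime indices, `[J : J ∩ K ∩ L]` is already
`[G : K ∩ L]`, so `J` and `K ∩ L` supplement each other. Let `P` be a Sylow `p`-subgroup of `K ∩ L`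
and suppose, by symmetry, that `p` does not divide `|S|`. Then `P` is Sylow in `K`, and some Sylow
subgroup `X` of `G` lies between `P` and `TP`, so that `TX = TP = PT = XT`. On the other hand `L`
contains a Sylow `p`-subgroup of `G`, and conjugating it by an element of `G = SL` shows that `S`
permutes with `X`. Hence `JP = JTP = JTX = JX = XJ = XTJ = PTJ = PJ`.
-/

section

open MulAction Subgroup

variable {G : Type*} [Group G]

theorem commute_coe_of_mul_subset {H K : Subgroup G} (h : (K : Set G) * H ⊆ H * K) :
    Commute (H : Set G) K :=
  Set.Subset.antisymm (by simpa using Set.inv_subset_inv.mpr h) h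

theorem coe_mul_eq_self_iff_le_stabilizer {H : Subgroup G} {A : Set G} :
    (H : Set G) * A = A ↔ H ≤ stabilizer G A := by
  rw [le_stabilizer_iff_smul_le]
  refine ⟨fun h g hg => ?_, fun h => Set.Subset.antisymm ?_ (Set.subset_mul_right A H.one_mem)⟩
  · exact (Set.smul_set_subset_mul hg).trans h.subset
  · exact Set.mul_subset_iff.mpr fun g hg a ha => h g hg (Set.smul_mem_smul_set ha)

theorem coe_mul_coe_of_le {H J : Subgroup G} (h : H ≤ J) : (H : Set G) * J = J :=
  Set.Subset.antisymm ((Set.mul_subset_mul_right h).trans (coe_mul_coe J).subset)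
    (Set.subset_mul_right _ H.one_mem)

theorem coe_mul_coe_of_ge {H J : Subgroup G} (h : H ≤ J) : (J : Set G) * H = J :=
  Set.Subset.antisymm ((Set.mul_subset_mul_left h).trans (coe_mul_coe J).subset)
    (Set.subset_mul_left _ H.one_mem)

theorem coe_sup_mul_eq_self {T S : Subgroup G} {A : Set G} (hT : (T : Set G) * A = A)
    (hS : (S : Set G) * A = A) : ((T ⊔ S : Subgroup G) : Set G) * A = A := by
  rw [coe_mul_eq_self_iff_le_stabilizer] at *
  exact sup_le hT hS

theorem coe_sup_of_commute {H K : Subgroup G} (h : Commute (H : Set G) K) :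
    ((H ⊔ K : Subgroup G) : Set G) = H * K := by
  have hH : (H : Set G) * (H * K) = H * K := by rw [← mul_assoc, coe_mul_coe]
  have hK : (K : Set G) * (H * K) = H * K := by rw [← h.left_comm, coe_mul_coe]
  refine Set.Subset.antisymm ?_ (Set.mul_subset_iff.mpr fun a ha b hb => mul_mem_sup ha hb)
  exact coe_sup_mul_eq_self hH hK ▸ Set.subset_mul_left _ ⟨1, H.one_mem, 1, K.one_mem, one_mul 1⟩

theorem commute_coe_sup {T S X : Subgroup G} (hT : Commute (T : Set G) X)
    (hS : Commute (S : Set G) X) : Commute ((T ⊔ S : Subgroup G) : Set G) X := by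
  set J := T ⊔ S
  have hTX : (T : Set G) * (X * J) = X * J := by
    rw [hT.left_comm, coe_mul_coe_of_le le_sup_left]
  have hSX : (S : Set G) * (X * J) = X * J := by
    rw [hS.left_comm, coe_mul_coe_of_le le_sup_right]
  have hJX : (J : Set G) * (X * J) = X * J := coe_sup_mul_eq_self hTX hSX
  refine (commute_coe_of_mul_subset ?_).symm
  exact hJX ▸ Set.mul_subset_mul_left (Set.subset_mul_left _ J.one_mem)

theorem commute_coe_conj_smul {H P : Subgroup G} {g : G} (hg : g ∈ H)
    (h : Commute (H : Set G) P) : Commute (H : Set G) (MulAut.conj g • P : Subgroup G) := by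
  have := h.map (MulDistribMulAction.toMonoidHom (Set G) (MulAut.conj g))
  simpa [← coe_pointwise_smul, conj_smul_eq_self_of_mem hg] using this

theorem smul_mk_one {H K : Subgroup G} (a : H) : a • ((1 : G) : G ⧸ K) = ((a : G) : G ⧸ K) :=
  congrArg QuotientGroup.mk (mul_one (a : G))

theorem orbit_mk_one_eq_univ_iff {H K : Subgroup G} :
    orbit H ((1 : G) : G ⧸ K) = Set.univ ↔ (H : Set G) * (K : Set G) = Set.univ := by
  simp only [Set.eq_univ_iff_forall, QuotientGroup.forall_mk, mem_orbit_iff, smul_mk_one,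
    QuotientGroup.eq, Set.mem_mul]
  refine forall_congr' fun g => ⟨fun ⟨a, ha⟩ => ?_, ?_⟩
  · exact ⟨a, a.2, (a : G)⁻¹ * g, ha, mul_inv_cancel_left _ g⟩
  · rintro ⟨a, ha, b, hb, rfl⟩
    exact ⟨⟨a, ha⟩, by simpa using hb⟩

theorem ncard_orbit_mk_one (H K : Subgroup G) :
    (orbit H ((1 : G) : G ⧸ K)).ncard = K.relIndex H := by
  rw [← index_stabilizer, relIndex]
  congr 1
  ext a
  rw [mem_stabilizer_iff, smul_mk_one, eq_comm, QuotientGroup.eq, mem_subgroupOf]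
  simp

theorem relIndex_eq_index_of_mul_eq_univ {H K : Subgroup G}
    (h : (H : Set G) * (K : Set G) = Set.univ) : K.relIndex H = K.index := by
  rw [← ncard_orbit_mk_one, orbit_mk_one_eq_univ_iff.mpr h, Set.ncard_univ, index]

theorem mul_eq_univ_of_relIndex_eq_index {H K : Subgroup G} [K.FiniteIndex]
    (h : K.relIndex H = K.index) : (H : Set G) * (K : Set G) = Set.univ := by
  rw [← orbit_mk_one_eq_univ_iff, Set.eq_univ_iff_ncard, ncard_orbit_mk_one, h, index]

theorem mul_eq_univ_symm {H K : Subgroup G} (h : (H : Set G) * (K : Set G) = Set.univ) :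
    (K : Set G) * (H : Set G) = Set.univ := by
  simpa using congrArg (·⁻¹) h

theorem relIndex_inf_of_coprime {J K L : Subgroup G}
    (h : Nat.Coprime (K.relIndex J) (L.relIndex J)) :
    (K ⊓ L).relIndex J = K.relIndex J * L.relIndex J := by
  refine le_antisymm relIndex_inf_le ?_
  have hdvd := h.mul_dvd_of_dvd_of_dvd (relIndex_dvd_of_le_left J (inf_le_left : K ⊓ L ≤ K))
    (relIndex_dvd_of_le_left J inf_le_right)
  obtain h0 | hpos := Nat.eq_zero_or_pos ((K ⊓ L).relIndex J)
  · have : K.relIndex J = 0 ∨ L.relIndex J = 0 := by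
      contrapose! h0
      exact relIndex_inf_ne_zero h0.1 h0.2
    simp [h0, this]
  · exact Nat.le_of_dvd hpos hdvd

theorem index_inf_of_coprime {K L : Subgroup G} (h : Nat.Coprime K.index L.index) :
    (K ⊓ L).index = K.index * L.index := by
  simpa using relIndex_inf_of_coprime (J := ⊤) (by simpa using h)

theorem coe_mul_coe_inf_eq_univ {J K L : Subgroup G} [K.FiniteIndex] [L.FiniteIndex]
    (hKL : Nat.Coprime K.index L.index) (hK : (J : Set G) * (K : Set G) = Set.univ)
    (hL : (J : Set G) * (L : Set G) = Set.univ) :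
    (J : Set G) * ((K ⊓ L : Subgroup G) : Set G) = Set.univ := by
  have hK' := relIndex_eq_index_of_mul_eq_univ hK
  have hL' := relIndex_eq_index_of_mul_eq_univ hL
  apply mul_eq_univ_of_relIndex_eq_index
  rw [relIndex_inf_of_coprime (by rwa [hK', hL']), hK', hL', index_inf_of_coprime hKL]

theorem relIndex_eq_index_of_coprime {K L : Subgroup G} [K.FiniteIndex]
    (h : Nat.Coprime K.index L.index) : L.relIndex K = L.index := by
  have := relIndex_mul_index (inf_le_left : K ⊓ L ≤ K)
  rw [inf_relIndex_left, index_inf_of_coprime h, mul_comm] at this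
  exact Nat.eq_of_mul_eq_mul_left (Nat.pos_of_ne_zero FiniteIndex.index_ne_zero) this

theorem exists_sylow_ge_le_of_not_dvd_index [Finite G] {p : ℕ} [Fact p.Prime] {P M : Subgroup G}
    (hP : IsPGroup p P) (hPM : P ≤ M) (hM : ¬ p ∣ M.index) :
    ∃ X : Sylow p G, P ≤ X ∧ X ≤ M := by
  obtain ⟨Q, hQ⟩ := (hP.comap_subtype (K := M)).exists_le_sylow
  have hindex : ¬ p ∣ (Q.map M.subtype).index := by
    rw [index_map_subtype]
    exact Nat.Prime.not_dvd_mul Fact.out Q.not_dvd_index hM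
  exact ⟨(Q.2.map M.subtype).toSylow hindex, fun x hx => ⟨⟨x, hPM hx⟩, hQ hx, rfl⟩,
    map_subtype_le _⟩

namespace IsSSSupplement

variable {H K P : Subgroup G}

theorem index_dvd_card (h : IsSSSupplement H K) : K.index ∣ Nat.card H :=
  relIndex_eq_index_of_mul_eq_univ h.1 ▸ relIndex_dvd_card K H

theorem coe_mul_eq_univ_of_le (h : IsSSSupplement H K) {T : Subgroup G} (hHT : H ≤ T) :
    (T : Set G) * (K : Set G) = Set.univ :=
  Set.univ_subset_iff.mp (h.1 ▸ Set.mul_subset_mul_right hHT)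

variable {p : ℕ} [Fact p.Prime]

theorem commute_of_not_dvd_relIndex (h : IsSSSupplement H K) (hP : IsPGroup p P) (hPK : P ≤ K)
    (hp : ¬ p ∣ P.relIndex K) : Commute (H : Set G) P := by
  have : Commute _ _ := h.2 p ((hP.comap_subtype (K := K) : IsPGroup p (P.subgroupOf K)).toSylow hp)
  simpa [map_subgroupOf_eq_of_le hPK] using this

theorem commute_sylow_of_le [Finite G] (h : IsSSSupplement H K) {X : Sylow p G} (hX : X ≤ K) :
    Commute (H : Set G) X :=
  h.commute_of_not_dvd_relIndex X.2 hX fun hp =>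
    X.not_dvd_index (hp.trans (relIndex_dvd_index_of_le hX))

theorem commute_sylow [Finite G] (h : IsSSSupplement H K) (hp : ¬ p ∣ Nat.card H)
    (X : Sylow p G) : Commute (H : Set G) X := by
  have hpK : ¬ p ∣ K.index := fun hd => hp (hd.trans h.index_dvd_card)
  obtain ⟨Y, -, hY⟩ := exists_sylow_ge_le_of_not_dvd_index IsPGroup.of_bot bot_le hpK
  obtain ⟨g, rfl⟩ := exists_smul_eq G Y X
  obtain ⟨a, ha, b, hb, rfl⟩ := Set.mem_mul.mp (h.1 ▸ Set.mem_univ g)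
  rw [mul_smul]
  exact commute_coe_conj_smul ha (h.commute_sylow_of_le (Sylow.smul_le hY ⟨b, hb⟩))

theorem exists_sylow_mul_eq [Finite G] (h : IsSSSupplement H K) (hP : IsPGroup p P) (hPK : P ≤ K)
    (hp : ¬ p ∣ P.relIndex K) :
    ∃ X : Sylow p G, (H : Set G) * X = H * P ∧ (X : Set G) * H = P * H := by
  have hcomm := h.commute_of_not_dvd_relIndex hP hPK hp
  have hsup := coe_sup_of_commute hcomm
  have hindex : ¬ p ∣ (H ⊔ P).index := by
    have hKHP := mul_eq_univ_symm (h.coe_mul_eq_univ_of_le (le_sup_left : H ≤ H ⊔ P))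
    rw [← relIndex_eq_index_of_mul_eq_univ hKHP]
    exact fun hd => hp (hd.trans (relIndex_dvd_of_le_left K le_sup_right))
  obtain ⟨X, hPX, hX⟩ := exists_sylow_ge_le_of_not_dvd_index hP le_sup_right hindex
  refine ⟨X, Set.Subset.antisymm ?_ (Set.mul_subset_mul_left hPX), Set.Subset.antisymm ?_
    (Set.mul_subset_mul_right hPX)⟩
  · rw [← hsup]
    exact Set.mul_subset_iff.mpr fun a ha x hx => mul_mem (mem_sup_left ha) (hX hx)
  · rw [← hcomm.eq, ← hsup]
    exact Set.mul_subset_iff.mpr fun x hx a ha => mul_mem (hX hx) (mem_sup_left ha)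

variable {T S L : Subgroup G}

theorem commute_coe_sup_of_not_dvd_card_right [Finite G] (hT : IsSSSupplement T K)
    (hS : IsSSSupplement S L) (hKL : Nat.Coprime K.index L.index) (hpS : ¬ p ∣ Nat.card S)
    (hP : IsPGroup p P) (hPKL : P ≤ K ⊓ L) (hp : ¬ p ∣ P.relIndex (K ⊓ L)) :
    Commute ((T ⊔ S : Subgroup G) : Set G) P := by
  have hPK : ¬ p ∣ P.relIndex K := by
    rw [← relIndex_mul_relIndex _ _ _ hPKL inf_le_left, inf_relIndex_left,
      relIndex_eq_index_of_coprime hKL]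
    exact Nat.Prime.not_dvd_mul Fact.out hp fun hd => hpS (hd.trans hS.index_dvd_card)
  have hTP := hT.commute_of_not_dvd_relIndex hP (hPKL.trans inf_le_left) hPK
  obtain ⟨X, hTX, hXT⟩ := hT.exists_sylow_mul_eq hP (hPKL.trans inf_le_left) hPK
  have hTX_comm : Commute (T : Set G) X := hTX.trans (hTP.eq.trans hXT.symm)
  have hJX := commute_coe_sup hTX_comm (hS.commute_sylow hpS X)
  set J := T ⊔ S
  have hTJ : T ≤ J := le_sup_left
  calc (J : Set G) * P = J * (T * P) := by rw [← mul_assoc, coe_mul_coe_of_ge hTJ]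
    _ = J * X := by rw [← hTX, ← mul_assoc, coe_mul_coe_of_ge hTJ]
    _ = X * J := hJX
    _ = P * T * J := by rw [← hXT, mul_assoc, coe_mul_coe_of_le hTJ]
    _ = P * J := by rw [mul_assoc, coe_mul_coe_of_le hTJ]

theorem commute_coe_sup_of_coprime [Finite G] (hT : IsSSSupplement T K) (hS : IsSSSupplement S L)
    (hcop : Nat.Coprime (Nat.card T) (Nat.card S)) (hP : IsPGroup p P) (hPKL : P ≤ K ⊓ L)
    (hp : ¬ p ∣ P.relIndex (K ⊓ L)) : Commute ((T ⊔ S : Subgroup G) : Set G) P := by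
  have hKL : Nat.Coprime K.index L.index := hcop.of_dvd hT.index_dvd_card hS.index_dvd_card
  by_cases hpS : p ∣ Nat.card S
  · have hpT : ¬ p ∣ Nat.card T := fun hpT =>
      Nat.not_coprime_of_dvd_of_dvd (Nat.Prime.one_lt Fact.out) hpT hpS hcop
    rw [inf_comm] at hPKL hp
    rw [sup_comm]
    exact hS.commute_coe_sup_of_not_dvd_card_right hT hKL.symm hpT hP hPKL hp
  · exact hT.commute_coe_sup_of_not_dvd_card_right hS hKL hpS hP hPKL hp

theorem sup_inf [Finite G] (hT : IsSSSupplement T K) (hS : IsSSSupplement S L)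
    (hcop : Nat.Coprime (Nat.card T) (Nat.card S)) : IsSSSupplement (T ⊔ S) (K ⊓ L) := by
  refine ⟨coe_mul_coe_inf_eq_univ (hcop.of_dvd hT.index_dvd_card hS.index_dvd_card)
    (hT.coe_mul_eq_univ_of_le le_sup_left) (hS.coe_mul_eq_univ_of_le le_sup_right),
    fun p _ P => ?_⟩
  refine hT.commute_coe_sup_of_coprime hS hcop (P.2.map _) (map_subtype_le _) ?_
  rw [relIndex, subgroupOf, comap_map_eq_self_of_injective (K ⊓ L).subtype_injective]
  exact P.not_dvd_index

end IsSSSupplement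

theorem join_isSSPermutable_of_coprime_general {G : Type*} [Group G] [Finite G] {T S : Subgroup G}
    (hcop : Nat.Coprime (Nat.card T) (Nat.card S)) :
    (IsSSPermutable T → IsSSPermutable S → IsSSPermutable (T ⊔ S)) ∧
    (IsNSSPermutable T → IsNSSPermutable S → IsNSSPermutable (T ⊔ S)) := by
  constructor
  · rintro ⟨K, hK⟩ ⟨L, hL⟩
    exact ⟨K ⊓ L, hK.sup_inf hL hcop⟩
  · rintro ⟨K, _, hK⟩ ⟨L, _, hL⟩
    exact ⟨K ⊓ L, inferInstance, hK.sup_inf hL hcop⟩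

end

/-- Lemma 2.6. -/
theorem join_isSSPermutable_of_coprime {G : Type*} [Group G] [Finite G] :
    (IsSolvable G → ∀ T S : Subgroup G, Nat.Coprime (Nat.card T) (Nat.card S) →
      (IsSSPermutable T → IsSSPermutable S → IsSSPermutable (T ⊔ S)) ∧
      (IsNSSPermutable T → IsNSSPermutable S → IsNSSPermutable (T ⊔ S))) ∧
    (∀ T S : Subgroup G, (∃ p k : ℕ, p.Prime ∧ Nat.card T = p ^ k) →
      (∃ q m : ℕ, q.Prime ∧ Nat.card S = q ^ m) →
      Nat.Coprime (Nat.card T) (Nat.card S) →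
      (IsSSPermutable T → IsSSPermutable S → IsSSPermutable (T ⊔ S)) ∧
      (IsNSSPermutable T → IsNSSPermutable S → IsNSSPermutable (T ⊔ S))) :=
  ⟨fun _ _ _ => join_isSSPermutable_of_coprime_general,
    fun _ _ _ _ => join_isSSPermutable_of_coprime_general⟩
end

section
/- Let G be a finite solvable PST-group with nilpotent residual L, and let D be a complement of L in G (a system normalizer of G). Then: (1) the derived subgroup D' is normal in G; (2) if H is an SS-permutable p-subgroup of G with SS-permutable supplement K, where p is a prime dividing |G|, then [H, K_p] ≤ O_p(G) for every Sylow p-subgroup K_p of K. -/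
/-
Let `q ≠ p`. In a PST-group a Sylow `q`-subgroup normalizes every subgroup of a normal `p`-subgroup
`P`, because such subgroups are S-permutable. Hence all `p'`-elements act on `P` by power
automorphisms, and power automorphisms commute. Two consequences give the result.

* `G'` is nilpotent: in a nontrivial solvable `G` there is a nontrivial normal subgroup all of whose
  subgroups are normal, consisting of fixed points of a Sylow `p`-subgroup on a normal `p`-subgroup.
  It is centralized by `G'`, so one can induct on `|G|`.
* `G'` centralizes `L`: let `P` be a Sylow `p`-subgroup of the nilpotent group `G'`. The derived
  subgroup of `G / C_G(P)` is a `p`-group, and a `p'`-element `x` of `G / C_G(P)` commutes with its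
  conjugates, hence with `⁅g, x⁆`. As `x` and `⁅g, x⁆` have coprime orders, `x` is central. So
  `G / C_G(P)` is nilpotent and `L ≤ C_G(P)`.
-/

open scoped Pointwise

/-- `L` is the nilpotent residual of `G`: the smallest normal subgroup of `G`
with nilpotent quotient. -/
def IsNilpotentResidual {G : Type*} [Group G] (L : Subgroup G) : Prop :=
  L.Normal ∧ ∀ [L.Normal], Group.IsNilpotent (G ⧸ L) ∧
    ∀ (N : Subgroup G) [N.Normal], Group.IsNilpotent (G ⧸ N) → L ≤ N

/-- `O_p(G)`, the largest normal `p`-subgroup of `G` (as the join of all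
normal `p`-subgroups). -/
def pCore (p : ℕ) (G : Type*) [Group G] : Subgroup G :=
  sSup {N : Subgroup G | N.Normal ∧ IsPGroup p N}

section Commutators

open Subgroup
open scoped commutatorElement

variable {G : Type*} [Group G]

theorem commute_of_commute_commutatorElement {x g : G} {m n : ℕ} (hmn : m.Coprime n)
    (hcomm : Commute ⁅g, x⁆ x) (hx : x ^ n = 1) (hgx : ⁅g, x⁆ ^ m = 1) : Commute g x := by
  have hgx' : ⁅g, x⁆ ^ n = 1 := calc
    ⁅g, x⁆ ^ n = (⁅g, x⁆ * x) ^ n := by rw [hcomm.mul_pow, hx, mul_one]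
    _ = (g * x * g⁻¹) ^ n := by rw [commutatorElement_def, inv_mul_cancel_right]
    _ = 1 := by rw [conj_pow, hx, mul_one, mul_inv_cancel]
  exact commutatorElement_eq_one_iff_commute.mp
    ((pow_eq_one_iff_of_coprime hmn).mp ⟨hgx, hgx'⟩)

theorem commutatorElement_mem_centralizer_of_mem_normalizer_zpowers {X : Set G} {a b : G}
    (ha : ∀ v ∈ X, a ∈ normalizer (zpowers v : Set G))
    (hb : ∀ v ∈ X, b ∈ normalizer (zpowers v : Set G)) : ⁅a, b⁆ ∈ centralizer X := by
  have exists_zpow_eq_conj : ∀ {c v : G}, c ∈ normalizer (zpowers v : Set G) →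
      ∃ i : ℤ, v ^ i = c * v * c⁻¹ := fun hc =>
    mem_zpowers_iff.mp ((mem_normalizer_iff.mp hc _).mp (mem_zpowers _))
  refine mem_centralizer_iff.mpr fun v hv => ?_
  obtain ⟨i, hi⟩ := exists_zpow_eq_conj (inv_mem (ha v hv))
  obtain ⟨j, hj⟩ := exists_zpow_eq_conj (inv_mem (hb v hv))
  have conj_comm : a⁻¹ * (b⁻¹ * v * b⁻¹⁻¹) * a⁻¹⁻¹ = b⁻¹ * (a⁻¹ * v * a⁻¹⁻¹) * b⁻¹⁻¹ := by
    rw [← hi, ← hj, ← conj_zpow, ← conj_zpow, ← hi, ← hj, ← zpow_mul, ← zpow_mul, mul_comm]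
  calc v * ⁅a, b⁆ = a * b * (b⁻¹ * (a⁻¹ * v * a⁻¹⁻¹) * b⁻¹⁻¹) * a⁻¹ * b⁻¹ := by
        rw [commutatorElement_def]; group
    _ = ⁅a, b⁆ * v := by rw [← conj_comm, commutatorElement_def]; group

theorem commutator_le_centralizer_of_forall_zpowers_normal {X : Set G}
    (hX : ∀ v ∈ X, (zpowers v).Normal) : commutator G ≤ centralizer X := by
  have mem_normalizer : ∀ g, ∀ v ∈ X, g ∈ normalizer (zpowers v : Set G) := fun g v hv =>
    normalizer_eq_top_iff.mpr (hX v hv) ▸ mem_top g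
  rw [commutator_def, commutator_le]
  exact fun a _ b _ => commutatorElement_mem_centralizer_of_mem_normalizer_zpowers
    (mem_normalizer a) (mem_normalizer b)

theorem commutator_map_mk' (N : Subgroup G) [N.Normal] :
    (commutator G).map (QuotientGroup.mk' N) = commutator (G ⧸ N) := by
  rw [commutator_def, commutator_def, map_commutator,
    map_top_of_surjective _ (QuotientGroup.mk'_surjective N)]

theorem isNilpotent_commutator_of_quotient {C : Subgroup G} [C.Normal]
    (hC : commutator G ≤ centralizer (C : Set G)) [Group.IsNilpotent (commutator (G ⧸ C))] :
    Group.IsNilpotent (commutator G) := by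
  let f : commutator G →* commutator (G ⧸ C) :=
    ((QuotientGroup.mk' C).comp (commutator G).subtype).codRestrict _ fun g =>
      commutator_map_mk' C ▸ mem_map_of_mem _ g.2
  refine Subgroup.isNilpotent_of_ker_le_center f fun g hg => mem_center_iff.mpr fun h => ?_
  have hgC : (g : G) ∈ C := (QuotientGroup.eq_one_iff _).mp (congrArg Subtype.val hg)
  exact Subtype.ext (mem_centralizer_iff.mp (hC h.2) g hgC).symm

theorem normal_commutator_of_sup_eq_top {L D : Subgroup G}
    (hL : commutator G ≤ centralizer (L : Set G)) (hLD : L ⊔ D = ⊤) : ⁅D, D⁆.Normal := by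
  have hDL : ⁅D, D⁆ ≤ centralizer (L : Set G) := (commutator_mono le_top le_top).trans hL
  rw [← normalizer_eq_top_iff, ← top_le_iff, ← hLD]
  exact sup_le ((le_centralizer_iff.mp hDL).trans (centralizer_le_normalizer _))
    (normalizer_commutator_ge_left D D)

theorem exists_normal_isMulCommutative_ne_bot [Nontrivial G] (hG : Group.IsSolvable G) :
    ∃ A : Subgroup G, A.Normal ∧ IsMulCommutative A ∧ A ≠ ⊥ := by
  classical
  have hex : ∃ n, derivedSeries G n = ⊥ := hG.solvable
  obtain ⟨n, hn⟩ : ∃ n, Nat.find hex = n + 1 := by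
    refine Nat.exists_eq_succ_of_ne_zero fun h => top_ne_bot (α := Subgroup G) ?_
    rw [← derivedSeries_zero, ← h]
    exact Nat.find_spec hex
  refine ⟨derivedSeries G n, inferInstance, ?_, Nat.find_min hex (hn ▸ n.lt_succ_self)⟩
  rw [← le_centralizer_iff_isMulCommutative, ← commutator_eq_bot_iff_le_centralizer,
    ← derivedSeries_succ, ← hn]
  exact Nat.find_spec hex

end Commutators

section SylowSubgroups

open Subgroup
open scoped commutatorElement

variable {G : Type*} [Group G]

theorem exists_pow_pow_eq_one_of_mem {p : ℕ} {P : Subgroup G} (hP : IsPGroup p P) {x : G}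
    (hx : x ∈ P) : ∃ k, x ^ p ^ k = 1 := by
  obtain ⟨k, hk⟩ := isPGroup_iff_pow_pow_eq_one.mp hP ⟨x, hx⟩
  exact ⟨k, congrArg Subtype.val hk⟩

theorem card_quotient_lt [Finite G] {N : Subgroup G} (hN : N ≠ ⊥) :
    Nat.card (G ⧸ N) < Nat.card G := by
  rw [← N.card_mul_index, ← index_eq_card]
  exact lt_mul_of_one_lt_left (Nat.pos_of_ne_zero index_ne_zero_of_finite)
    (N.one_lt_card_iff_ne_bot.mpr hN)

theorem eq_top_of_forall_exists_sylow_le [Finite G] {H : Subgroup G}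
    (hH : ∀ (q : ℕ) [Fact q.Prime], ∃ Q : Sylow q G, (Q : Subgroup G) ≤ H) : H = ⊤ := by
  rw [← index_eq_one]
  by_contra hne
  obtain ⟨q, hq, hdvd⟩ := Nat.exists_prime_and_dvd hne
  have : Fact q.Prime := ⟨hq⟩
  obtain ⟨Q, hQ⟩ := hH q
  exact Q.not_dvd_index (hdvd.trans (index_dvd_of_le hQ))

theorem le_of_forall_exists_sylow_map_le [Finite G] {N H : Subgroup G}
    (hH : ∀ (q : ℕ) [Fact q.Prime], ∃ Q : Sylow q N, Q.toSubgroup.map N.subtype ≤ H) :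
    N ≤ H := by
  rw [← subgroupOf_eq_top]
  refine eq_top_of_forall_exists_sylow_le fun q _ => ?_
  obtain ⟨Q, hQ⟩ := hH q
  exact ⟨Q, map_le_iff_le_comap.mp hQ⟩

theorem sylow_le_centralizer_sylow_of_isNilpotent [Finite G] [Group.IsNilpotent G] {p q : ℕ}
    [Fact p.Prime] [Fact q.Prime] (hpq : p ≠ q) (P : Sylow p G) (Q : Sylow q G) :
    (Q : Subgroup G) ≤ centralizer (P : Set G) := fun y hy =>
  mem_centralizer_iff.mpr fun x hx => commute_of_normal_of_disjoint P.toSubgroup Q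
    inferInstance inferInstance (IsPGroup.disjoint_of_ne p q hpq _ _ P.2 Q.2) x y hx hy

theorem normal_map_subtype_sylow [Finite G] {N : Subgroup G} [N.Normal] [Group.IsNilpotent N]
    {p : ℕ} [Fact p.Prime] (P : Sylow p N) : (P.toSubgroup.map N.subtype).Normal :=
  have : P.toSubgroup.Characteristic := P.characteristic_of_normal inferInstance
  inferInstance

theorem le_sylow_map_sup_centralizer [Finite G] {N : Subgroup G} [Group.IsNilpotent N]
    {p : ℕ} [Fact p.Prime] (P : Sylow p N) :
    N ≤ P.toSubgroup.map N.subtype ⊔ centralizer (P.toSubgroup.map N.subtype : Set G) := by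
  refine le_of_forall_exists_sylow_map_le fun q _ => ?_
  rcases eq_or_ne p q with rfl | hpq
  · exact ⟨P, le_sup_left⟩
  · obtain ⟨Q⟩ : Nonempty (Sylow q N) := inferInstance
    refine ⟨Q, le_sup_of_le_right ?_⟩
    rw [← commutator_eq_bot_iff_le_centralizer, ← map_commutator,
      commutator_eq_bot_iff_le_centralizer.mpr
        (sylow_le_centralizer_sylow_of_isNilpotent hpq P Q), Subgroup.map_bot]

open scoped IsMulCommutative in
theorem exists_normal_isPGroup_ne_bot [Finite G] [Nontrivial G] (hG : Group.IsSolvable G) :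
    ∃ (p : ℕ) (_ : Fact p.Prime) (M : Subgroup G), M.Normal ∧ IsPGroup p M ∧ M ≠ ⊥ := by
  obtain ⟨A, _, _, hA⟩ := exists_normal_isMulCommutative_ne_bot hG
  obtain ⟨p, hp, hdvd⟩ := Nat.exists_prime_and_dvd (mt card_eq_one.mp hA)
  have : Fact p.Prime := ⟨hp⟩
  obtain ⟨P⟩ : Nonempty (Sylow p A) := inferInstance
  refine ⟨p, this, _, normal_map_subtype_sylow P, P.2.map _, ?_⟩
  rw [Ne, map_eq_bot_iff_of_injective _ A.subtype_injective]
  exact P.ne_bot_of_dvd_card hdvd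

theorem inf_centralizer_ne_bot_of_isPGroup [Finite G] {p : ℕ} [Fact p.Prime] {M P : Subgroup G}
    [M.Normal] (hM : IsPGroup p M) (hM_ne : M ≠ ⊥) (hP : IsPGroup p P) :
    M ⊓ centralizer (P : Set G) ≠ ⊥ := by
  let _ : MulAction P M :=
    MulAction.compHom M ((MulAut.conjNormal : G →* MulAut M).comp P.subtype)
  have coe_smul : ∀ (g : P) (m : M), ((g • m : M) : G) = g * m * (g : G)⁻¹ := fun g m =>
    MulAut.conjNormal_apply (g : G) m
  have hdvd : p ∣ Nat.card M := hM.card_eq_or_dvd.resolve_left (mt card_eq_one.mp hM_ne)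
  obtain ⟨b, hb, hb_ne⟩ := hP.exists_fixed_point_of_prime_dvd_card_of_fixed_point M hdvd
    (a := (1 : M)) fun g => Subtype.ext (by simp [coe_smul])
  refine fun hbot => hb_ne (Subtype.ext ?_)
  have hb_mem : (b : G) ∈ M ⊓ centralizer (P : Set G) := by
    refine ⟨b.2, mem_centralizer_iff.mpr fun g hg => ?_⟩
    rw [← mul_inv_eq_iff_eq_mul, ← coe_smul ⟨g, hg⟩, hb]
  exact (mem_bot.mp (hbot ▸ hb_mem)).symm

theorem isNilpotent_of_isPGroup_commutator [Finite G] {p : ℕ} [Fact p.Prime]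
    (hG : IsPGroup p (commutator G))
    (hcomm : ∀ (q : ℕ) [Fact q.Prime], p ≠ q → ∀ Q : Sylow q G, ∀ x ∈ Q, ∀ g : G,
      Commute ⁅g, x⁆ x) :
    Group.IsNilpotent G := by
  refine (Group.isNilpotent_of_finite_tfae.out 0 3).mpr fun (q : ℕ) (_ : Fact q.Prime) Q => ?_
  rcases eq_or_ne p q with rfl | hpq
  · exact Normal.of_commutator_le G (hG.le_sylow_of_normal Q)
  · have coprime_pow (i j : ℕ) : (p ^ i).Coprime (q ^ j) :=
      ((Nat.coprime_primes Fact.out Fact.out).mpr hpq).pow i j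
    refine ⟨fun x hx g => ?_⟩
    obtain ⟨j, hj⟩ := exists_pow_pow_eq_one_of_mem Q.2 hx
    obtain ⟨i, hi⟩ := exists_pow_pow_eq_one_of_mem hG
      (commutator_mem_commutator (mem_top g) (mem_top x))
    have hgx : Commute g x :=
      commute_of_commute_commutatorElement (coprime_pow i j) (hcomm q hpq Q x hx g) hj hi
    rwa [hgx.eq, mul_inv_cancel_right]

theorem le_pCore_of_isPGroup_of_le [Finite G] {N X : Subgroup G} [N.Normal]
    [Group.IsNilpotent N] {p : ℕ} [Fact p.Prime] (hX : IsPGroup p X) (hXN : X ≤ N) :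
    X ≤ pCore p G := by
  obtain ⟨P, hP⟩ := (hX.comap_subtype (K := N)).exists_le_sylow
  calc X = (X.subgroupOf N).map N.subtype := (map_subgroupOf_eq_of_le hXN).symm
    _ ≤ P.toSubgroup.map N.subtype := map_mono hP
    _ ≤ pCore p G := le_sSup ⟨normal_map_subtype_sylow P, P.2.map _⟩

end SylowSubgroups

section PermutingSubgroups

open Subgroup

variable {G : Type*} [Group G] {H K : Subgroup G}

theorem mul_comm_of_mul_subset_mul (hKH : (K : Set G) * (H : Set G) ⊆ H * K) :
    (H : Set G) * (K : Set G) = K * H := by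
  refine Set.Subset.antisymm ?_ hKH
  simpa only [mul_inv_rev, inv_coe_set] using Set.inv_subset_inv.mpr hKH

theorem coe_sup_eq_mul_of_mul_comm (hHK : (H : Set G) * (K : Set G) = K * H) :
    ((H ⊔ K : Subgroup G) : Set G) = H * K := by
  let HK : Subgroup G :=
    { carrier := (H : Set G) * (K : Set G)
      one_mem' := ⟨1, H.one_mem, 1, K.one_mem, one_mul 1⟩
      mul_mem' := fun {a b} ha hb => by
        have hab := Set.mul_mem_mul ha hb
        rwa [mul_assoc, ← mul_assoc (K : Set G), ← hHK, mul_assoc, coe_mul_coe, ← mul_assoc,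
          coe_mul_coe] at hab
      inv_mem' := fun {a} ha => by
        rwa [← Set.mem_inv, mul_inv_rev, inv_coe_set, inv_coe_set, ← hHK] }
  refine Set.Subset.antisymm (SetLike.coe_subset_coe (T := HK).mpr (sup_le ?_ ?_)) ?_
  · exact fun h hh => ⟨h, hh, 1, K.one_mem, mul_one h⟩
  · exact fun k hk => ⟨1, H.one_mem, k, hk, one_mul k⟩
  · exact Set.mul_subset_iff.mpr fun h hh k hk => mul_mem_sup hh hk

theorem isPGroup_sup_of_mul_comm [Finite G] {p : ℕ} [Fact p.Prime] (hH : IsPGroup p H)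
    (hK : IsPGroup p K) (hHK : (H : Set G) * (K : Set G) = K * H) :
    IsPGroup p (H ⊔ K : Subgroup G) := by
  obtain ⟨a, ha⟩ := IsPGroup.iff_card.mp hK
  obtain ⟨b, hb⟩ := hH.card_orbit ((1 : G) : G ⧸ K)
  have horbit : MulAction.orbit H ((1 : G) : G ⧸ K) = (QuotientGroup.mk : G → G ⧸ K) '' H := by
    ext y
    constructor
    · rintro ⟨h, rfl⟩
      exact ⟨h, h.2, congrArg QuotientGroup.mk (mul_one (h : G)).symm⟩
    · rintro ⟨h, hh, rfl⟩
      exact ⟨⟨h, hh⟩, congrArg QuotientGroup.mk (mul_one h)⟩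
  refine IsPGroup.of_card (n := a + b) ?_
  calc Nat.card (H ⊔ K : Subgroup G) = Nat.card ((H : Set G) * (K : Set G) : Set G) := by
        rw [← coe_sup_eq_mul_of_mul_comm hHK]; rfl
    _ = p ^ (a + b) := by
        rw [card_mul_eq_card_subgroup_mul_card_quotient, ← horbit, ha, hb, pow_add]

end PermutingSubgroups

section SPermutable

open Subgroup

variable {G : Type*} [Group G]

theorem isSPermutable_of_normal (N : Subgroup G) [N.Normal] : IsSPermutable N :=
  fun _ _ P => (set_mul_normal_comm (P : Set G) N).symm

theorem isSPermutable_of_isPGroup {p : ℕ} [Fact p.Prime] (hG : IsPGroup p G) (H : Subgroup G) :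
    IsSPermutable H := by
  intro q _ Q
  rcases eq_or_ne p q with rfl | hpq
  · have hQ : (Q : Subgroup G) = ⊤ := (Q.is_maximal' (hG.to_subgroup ⊤) le_top).symm
    rw [hQ]
    exact (set_mul_normal_comm (H : Set G) ⊤)
  · have hQ : (Q : Subgroup G) = ⊥ :=
      disjoint_self.mp (IsPGroup.disjoint_of_ne p q hpq _ _ (hG.to_subgroup Q) Q.2)
    rw [hQ]
    exact (set_mul_normal_comm (H : Set G) ⊥)

variable {G' : Type*} [Group G'] [Finite G] {f : G →* G'}

theorem IsSPermutable.map (hf : Function.Surjective f) {H : Subgroup G} (hH : IsSPermutable H) :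
    IsSPermutable (H.map f) := by
  intro p _ Q
  obtain ⟨P, rfl⟩ := Sylow.mapSurjective_surjective hf p Q
  simp only [Sylow.coe_mapSurjective, coe_map, ← Set.image_mul f, hH p P]

theorem IsSPermutable.comap (hf : Function.Surjective f) {H : Subgroup G'}
    (hH : IsSPermutable H) : IsSPermutable (H.comap f) := by
  refine fun p _ P => mul_comm_of_mul_subset_mul ?_
  rintro _ ⟨y, hy, x, hx, rfl⟩
  have hyx : f y * f x ∈ (H : Set G') * (P.mapSurjective hf : Set G') :=
    hH p (P.mapSurjective hf) ▸ Set.mul_mem_mul (mem_map_of_mem f hy) hx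
  obtain ⟨h, hh, _, ⟨z, hz, rfl⟩, heq⟩ := hyx
  refine ⟨y * x * z⁻¹, ?_, z, hz, inv_mul_cancel_right _ _⟩
  have hfh : f (y * x * z⁻¹) = h := by rw [map_mul, map_mul, map_inv, ← heq, mul_inv_cancel_right]
  exact mem_comap.mpr (hfh ▸ hh)

theorem IsPSTGroup.of_surjective (hf : Function.Surjective f) (hG : IsPSTGroup G) :
    IsPSTGroup G' := by
  intro H K hHK hH hK
  have hH_comap : IsSPermutable ((H.comap f).subgroupOf (K.comap f)) :=
    hH.comap (f.subgroupComap_surjective_of_surjective K hf)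
  rw [← map_comap_eq_self_of_surjective hf H]
  exact (hG _ _ (comap_mono hHK) hH_comap (hK.comap hf)).map hf

end SPermutable

section PSTGroups

open Subgroup
open scoped commutatorElement

variable {G : Type*} [Group G] {p : ℕ} [Fact p.Prime]

theorem IsPSTGroup.sylow_le_normalizer (hG : IsPSTGroup G) {q : ℕ} [Fact q.Prime] (hpq : p ≠ q)
    {M X : Subgroup G} [M.Normal] (hM : IsPGroup p M) (hXM : X ≤ M) (Q : Sylow q G) :
    (Q : Subgroup G) ≤ normalizer (X : Set G) := by
  have hXQ : (X : Set G) * (Q : Set G) = Q * X :=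
    hG X M hXM (isSPermutable_of_isPGroup hM _) (isSPermutable_of_normal M) q Q
  have conj_mem : ∀ g ∈ Q, ∀ x ∈ X, g * x * g⁻¹ ∈ X := by
    intro g hg x hx
    have hgx : g * x ∈ (X : Set G) * (Q : Set G) := hXQ ▸ Set.mul_mem_mul hg hx
    obtain ⟨x', hx', g', hg', heq⟩ := hgx
    have hconj : g * x * g⁻¹ = x' * (g' * g⁻¹) := by rw [← heq]; group
    have hM_mem : g' * g⁻¹ ∈ M := by
      rw [← inv_mul_eq_iff_eq_mul.mpr hconj]
      exact mul_mem (inv_mem (hXM hx')) (Normal.conj_mem ‹_› x (hXM hx) g)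
    have hone : g' * g⁻¹ = 1 :=
      disjoint_def.mp (IsPGroup.disjoint_of_ne p q hpq M Q hM Q.2) hM_mem
        (mul_mem hg' (inv_mem hg))
    rwa [hconj, hone, mul_one]
  refine fun g hg => mem_normalizer_iff.mpr fun x => ⟨conj_mem g hg x, fun hx => ?_⟩
  simpa [mul_assoc] using conj_mem g⁻¹ (inv_mem hg) _ hx

theorem IsPSTGroup.commutatorElement_mem_centralizer (hG : IsPSTGroup G) {P : Subgroup G}
    [P.Normal] (hP : IsPGroup p P) {q : ℕ} [Fact q.Prime] (hpq : p ≠ q) (Q : Sylow q G) {x : G}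
    (hx : x ∈ Q) (g : G) : ⁅⁅g, x⁆, x⁆ ∈ centralizer (P : Set G) := by
  have mem_normalizer {y : G} (R : Sylow q G) (hy : y ∈ R) :
      ∀ v ∈ P, y ∈ normalizer (zpowers v : Set G) := fun v hv =>
    hG.sylow_le_normalizer hpq hP (zpowers_le.mpr hv) R hy
  have hconj : g * x * g⁻¹ ∈ g • Q := smul_mem_pointwise_smul x (MulAut.conj g) Q hx
  exact commutatorElement_mem_centralizer_of_mem_normalizer_zpowers
    (fun v hv => mul_mem (mem_normalizer _ hconj v hv) (inv_mem (mem_normalizer Q hx v hv)))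
    (mem_normalizer Q hx)

variable [Finite G]

theorem IsPSTGroup.normal_of_sylow_le_normalizer (hG : IsPSTGroup G) {M X : Subgroup G}
    [M.Normal] (hM : IsPGroup p M) (hXM : X ≤ M) (P : Sylow p G)
    (hP : (P : Subgroup G) ≤ normalizer (X : Set G)) : X.Normal := by
  refine normalizer_eq_top_iff.mp (eq_top_of_forall_exists_sylow_le fun q _ => ?_)
  rcases eq_or_ne p q with rfl | hpq
  · exact ⟨P, hP⟩
  · obtain ⟨Q⟩ : Nonempty (Sylow q G) := inferInstance
    exact ⟨Q, hG.sylow_le_normalizer hpq hM hXM Q⟩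

theorem IsPSTGroup.isNilpotent_quotient_centralizer (hG : IsPSTGroup G) {P : Subgroup G}
    [P.Normal] (hP : IsPGroup p P) (hcomm : commutator G ≤ P ⊔ centralizer (P : Set G)) :
    Group.IsNilpotent (G ⧸ centralizer (P : Set G)) := by
  let π := QuotientGroup.mk' (centralizer (P : Set G))
  have hπ : Function.Surjective π := QuotientGroup.mk'_surjective _
  have commutator_le : commutator (G ⧸ centralizer (P : Set G)) ≤ P.map π := by
    rw [← commutator_map_mk']
    refine (map_mono hcomm).trans_eq ?_
    rw [Subgroup.map_sup, QuotientGroup.map_mk'_self, sup_bot_eq]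
  refine isNilpotent_of_isPGroup_commutator ((hP.map π).to_le commutator_le) fun q _ hpq Q => ?_
  obtain ⟨Q, rfl⟩ := Sylow.mapSurjective_surjective hπ q Q
  rintro _ ⟨x, hx, rfl⟩ g
  obtain ⟨g, rfl⟩ := hπ g
  rw [← commutatorElement_eq_one_iff_commute, ← map_commutatorElement, ← map_commutatorElement]
  exact (QuotientGroup.eq_one_iff _).mpr (hG.commutatorElement_mem_centralizer hP hpq Q hx g)

theorem IsPSTGroup.isNilpotent_commutator (hsol : Group.IsSolvable G) (hG : IsPSTGroup G) :
    Group.IsNilpotent (commutator G) := by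
  induction hn : Nat.card G using Nat.strong_induction_on generalizing G with
  | _ n ih =>
  subst hn
  rcases subsingleton_or_nontrivial G with hsub | hnt
  · infer_instance
  obtain ⟨p, _, M, _, hM, hM_ne⟩ := exists_normal_isPGroup_ne_bot hsol
  obtain ⟨P⟩ : Nonempty (Sylow p G) := inferInstance
  let C := M ⊓ centralizer (P : Set G)
  have normal_of_le : ∀ X ≤ C, X.Normal := fun X hX =>
    hG.normal_of_sylow_le_normalizer hM (hX.trans inf_le_left) P <|
      (le_centralizer_iff.mp (hX.trans inf_le_right)).trans (centralizer_le_normalizer _)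
  have hC : C.Normal := normal_of_le C le_rfl
  have hC_cent : commutator G ≤ centralizer (C : Set G) :=
    commutator_le_centralizer_of_forall_zpowers_normal fun v hv =>
      normal_of_le _ (zpowers_le.mpr hv)
  have : Group.IsNilpotent (commutator (G ⧸ C)) :=
    ih _ (card_quotient_lt (inf_centralizer_ne_bot_of_isPGroup hM hM_ne P.2)) inferInstance
      (hG.of_surjective (QuotientGroup.mk'_surjective C)) rfl
  exact isNilpotent_commutator_of_quotient hC_cent

end PSTGroups

section NilpotentResidual

open Subgroup

variable {G : Type*} [Group G] {L : Subgroup G}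

theorem IsNilpotentResidual.le (hL : IsNilpotentResidual L) (N : Subgroup G) [N.Normal]
    (hN : Group.IsNilpotent (G ⧸ N)) : L ≤ N :=
  have := hL.1
  hL.2.2 N hN

theorem IsNilpotentResidual.commutator_le_centralizer [Finite G] (hL : IsNilpotentResidual L)
    (hG : IsPSTGroup G) [Group.IsNilpotent (commutator G)] :
    commutator G ≤ centralizer (L : Set G) := by
  refine le_of_forall_exists_sylow_map_le fun p _ => ?_
  obtain ⟨P⟩ : Nonempty (Sylow p (commutator G)) := inferInstance
  have := normal_map_subtype_sylow P
  refine ⟨P, le_centralizer_iff.mp (hL.le _ ?_)⟩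
  exact hG.isNilpotent_quotient_centralizer (P.2.map _) (le_sylow_map_sup_centralizer P)

end NilpotentResidual

theorem lemma27_general {G : Type*} [Group G] [Finite G] (hsol : Group.IsSolvable G)
    (hpst : IsPSTGroup G) :
    (∀ L D : Subgroup G, IsNilpotentResidual L → L ⊔ D = ⊤ →
      ((commutator D).map D.subtype).Normal) ∧
    ∀ (p : ℕ) [Fact p.Prime] (H P : Subgroup G), IsPGroup p H → IsPGroup p P →
      (H : Set G) * (P : Set G) = P * H → ⁅H, P⁆ ≤ pCore p G := by
  have hnil : Group.IsNilpotent (commutator G) := hpst.isNilpotent_commutator hsol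
  refine ⟨fun L D hL hLD => ?_, fun p _ H P hH hP hHP => ?_⟩
  · rw [Subgroup.map_subtype_commutator]
    exact normal_commutator_of_sup_eq_top (hL.commutator_le_centralizer hpst) hLD
  · have hcomm : IsPGroup p (⁅H, P⁆ : Subgroup G) :=
      (isPGroup_sup_of_mul_comm hH hP hHP).to_le (Subgroup.commutator_le_sup H P)
    exact le_pCore_of_isPGroup_of_le (N := commutator G) hcomm
      (Subgroup.commutator_mono le_top le_top)

/-- Lemma 2.7. -/
theorem lemma27 {G : Type*} [Group G] [Finite G]
    (hsol : IsSolvable G) (hpst : IsPSTGroup G)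
    (L D : Subgroup G) (hL : IsNilpotentResidual L) (hD : L.IsComplement' D) :
    ((commutator D).map D.subtype).Normal ∧
      ∀ (p : ℕ), p.Prime → p ∣ Nat.card G →
        ∀ H : Subgroup G, IsPGroup p H → ∀ K : Subgroup G, IsSSSupplement H K →
          ∀ Kp : Sylow p K, ⁅H, Kp.toSubgroup.map K.subtype⁆ ≤ pCore p G := by
  obtain ⟨normal_commutator, commutator_le_pCore⟩ := lemma27_general hsol hpst
  refine ⟨normal_commutator L D hL hD.sup_eq_top, fun p hp _ H hH K hK Kp => ?_⟩
  have : Fact p.Prime := ⟨hp⟩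
  exact commutator_le_pCore p H _ hH (Kp.2.map K.subtype) (hK.2 p Kp)
end
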